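/- arXiv:2405.06314 — 3 statements merged into one kernel-verified Lean document; each statement's English description precedes it below -/
import Mathlib

section
/- Let X_n ⊂ ℝ² be a sequence of closed sets converging in the Painlevé–Kuratowski sense to a nonempty closed set X ⊂ ℝ². Then the Clarke subdifferentials of the squared distance functions converge graphically: the graphs of ∂(dist_{X_n}²) converge in the Painlevé–Kuratowski sense to the graph of ∂(dist_X²). Equivalently (identifying functionals with vectors via the Euclidean inner product), the graphs of the multifunctions x ↦ convexHull(P_{X_n}(x)) converge in the Painlevé–Kuratowski sense to the graph of x ↦ convexHull(P_X(x)). -/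
/-!
Write `‖x‖² - dist(x, A)² = 2 φ_A(x)` with `φ_A(x) = sup_{a ∈ A} (⟪x, a⟫ - ‖a‖² / 2)` (`asplund`).
The function `φ_A` is convex, and its subdifferential at `x` is `conv P_A(x)`
(`subgradient_of_mem`, `mem_of_subgradient`; the converse inclusion is a separation argument, which
needs that the convex hull of a compact set is compact in finite dimension). Painlevé–Kuratowski
convergence `X_n → X` gives `φ_{X_n}(y_n) → φ_X(y)` whenever `y_n → y` (`tendsto_asplund`).

Graphical convergence of `conv P_{X_n}` is then an instance of Attouch's theorem (`kConv_graph`):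
the subgradient inequality passes to the limit, which bounds the upper limit of the graphs, and for
`v ∈ conv P_X(x)` minimizers of `φ_{X_n}(y) - ⟪v, y⟫ + ‖y - x‖² / 2` near `x` provide points of the
graphs converging to `(x, v)` (`graph_subset_kLiminf`).

Finally, the Clarke subdifferential of `dist(·, A)²` at `x` is `{2⟪x - v, ·⟫ : v ∈ conv P_A(x)}`
(`clarke_sq_infDist`): derivatives at points of differentiability come from nearest points, and
each `p ∈ P_A(x)` is attained along the segment from `x` to `p`, on which `p` is the only nearest
point, so that `dist(·, A)²` is differentiable there. The graphs of the two multifunctions therefore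
correspond under a homeomorphism, which preserves Painlevé–Kuratowski convergence.
-/

open Filter Topology Metric MeasureTheory

/-- Kuratowski lower limit of a sequence of sets. -/
def KLiminf {α : Type*} [TopologicalSpace α] (A : ℕ → Set α) : Set α :=
  {x | ∃ u : ℕ → α, (∀ n, u n ∈ A n) ∧ Tendsto u atTop (𝓝 x)}

/-- Kuratowski upper limit of a sequence of sets. -/
def KLimsup {α : Type*} [TopologicalSpace α] (A : ℕ → Set α) : Set α :=
  {x | ∃ φ : ℕ → ℕ, StrictMono φ ∧
    ∃ u : ℕ → α, (∀ n, u n ∈ A (φ n)) ∧ Tendsto u atTop (𝓝 x)}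

/-- Painlevé–Kuratowski convergence of a sequence of sets to `L`. -/
def KConv {α : Type*} [TopologicalSpace α] (A : ℕ → Set α) (L : Set α) : Prop :=
  KLiminf A = L ∧ KLimsup A = L

/-- The Clarke subdifferential of `f` at `x`, relative to the open set `Ω`:
the convex hull of all limits of derivatives of `f` taken at points of
differentiability of `f` inside `Ω` converging to `x`. -/
noncomputable def clarke {p : ℕ} {F : Type*} [NormedAddCommGroup F] [NormedSpace ℝ F]
    (Ω : Set (EuclideanSpace ℝ (Fin p))) (f : EuclideanSpace ℝ (Fin p) → F)
    (x : EuclideanSpace ℝ (Fin p)) : Set (EuclideanSpace ℝ (Fin p) →L[ℝ] F) :=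
  convexHull ℝ {u | ∃ y : ℕ → EuclideanSpace ℝ (Fin p),
    (∀ n, y n ∈ Ω) ∧ (∀ n, DifferentiableAt ℝ f (y n)) ∧
    Tendsto y atTop (𝓝 x) ∧ Tendsto (fun n => fderiv ℝ f (y n)) atTop (𝓝 u)}

/-- The graph of a multifunction `F` restricted to `Ω`. -/
def mgraph {α β : Type*} (Ω : Set α) (F : α → Set β) : Set (α × β) :=
  {q | q.1 ∈ Ω ∧ q.2 ∈ F q.1}

/-- The set of nearest points to `x` in `A`. -/
def nearestPts {α : Type*} [MetricSpace α] (A : Set α) (x : α) : Set α :=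
  {a ∈ A | dist x a = infDist x A}

section helpers

set_option linter.unusedSectionVars false

variable {E : Type*} [NormedAddCommGroup E] [InnerProductSpace ℝ E]

/-! ### Compactness of convex hulls in finite dimension -/

theorem IsCompact.convexJoin_isCompact {s t : Set E} (hs : IsCompact s) (ht : IsCompact t) :
    IsCompact (convexJoin ℝ s t) := by
  have hc : Continuous (fun q : ℝ × E × E => q.2.1 + q.1 • (q.2.2 - q.2.1)) := by fun_prop
  convert ((isCompact_Icc (a := (0 : ℝ)) (b := 1)).prod (hs.prod ht)).image hc using 1
  ext x
  simp only [mem_convexJoin, segment_eq_image', Set.mem_image, Set.mem_prod, Prod.exists]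
  constructor
  · rintro ⟨a, ha, b, hb, θ, hθ, rfl⟩
    exact ⟨θ, a, b, ⟨hθ, ha, hb⟩, rfl⟩
  · rintro ⟨θ, a, b, ⟨hθ, ha, hb⟩, rfl⟩
    exact ⟨a, ha, b, hb, θ, hθ, rfl⟩

/-- The iterated join of `k + 1` copies of `s`: all convex combinations of `k + 1` points. -/
def iterJoin (s : Set E) : ℕ → Set E
  | 0 => s
  | k + 1 => convexJoin ℝ s (iterJoin s k)

theorem isCompact_iterJoin {s : Set E} (hs : IsCompact s) (k : ℕ) : IsCompact (iterJoin s k) := by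
  induction k with
  | zero => exact hs
  | succ k ih => exact hs.convexJoin_isCompact ih

theorem iterJoin_subset (s : Set E) (k : ℕ) : iterJoin s k ⊆ convexHull ℝ s := by
  induction k with
  | zero => exact subset_convexHull ℝ s
  | succ k ih => exact convexJoin_subset (subset_convexHull ℝ s) ih (convex_convexHull ℝ s)

theorem convexHull_finset_subset_iterJoin (s : Set E) (k : ℕ) (t : Finset E) (hts : ↑t ⊆ s)
    (hk : t.card = k + 1) : convexHull ℝ (t : Set E) ⊆ iterJoin s k := by
  classical
  induction k generalizing t with
  | zero =>
    obtain ⟨a, rfl⟩ := Finset.card_eq_one.1 hk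
    simpa [iterJoin] using hts
  | succ k ih =>
    obtain ⟨a, t', hat, rfl, ht'⟩ := Finset.card_eq_succ.1 hk
    have hne : (t' : Set E).Nonempty := by
      rw [Finset.coe_nonempty, ← Finset.card_pos]; omega
    rw [Finset.coe_insert] at hts ⊢
    rw [convexHull_insert hne]
    exact convexJoin_mono (by simpa using hts (Set.mem_insert a _))
      (ih t' (fun x hx => hts (Set.mem_insert_of_mem _ hx)) ht')

/-- By Carathéodory, the convex hull is a finite union of iterated joins. -/
theorem isCompact_convexHull_of_finiteDimensional [FiniteDimensional ℝ E] {s : Set E}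
    (hs : IsCompact s) : IsCompact (convexHull ℝ s) := by
  have h : convexHull ℝ s = ⋃ k ∈ Finset.range (Module.finrank ℝ E + 1), iterJoin s k := by
    apply Set.Subset.antisymm
    · rw [convexHull_eq_union]
      intro x hx
      simp only [Set.mem_iUnion] at hx ⊢
      obtain ⟨t, hts, hind, hxt⟩ := hx
      have hne : t.Nonempty := by
        rw [← Finset.coe_nonempty, ← convexHull_nonempty_iff (𝕜 := ℝ)]; exact ⟨x, hxt⟩
      have hpos := Finset.card_pos.2 hne
      have hcard : t.card ≤ Module.finrank ℝ E + 1 := by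
        have h1 := hind.card_le_finrank_succ
        have h2 := Submodule.finrank_le (vectorSpan ℝ (Set.range ((↑) : t → E)))
        rw [Fintype.card_coe] at h1
        omega
      exact ⟨t.card - 1, by rw [Finset.mem_range]; omega,
        convexHull_finset_subset_iterJoin s _ t hts (by omega) hxt⟩
    · exact Set.iUnion₂_subset fun k _ => iterJoin_subset s k
  rw [h]
  exact Finset.isCompact_biUnion _ fun k _ => isCompact_iterJoin hs k

/-! ### The convex function attached to a closed set -/

/-- The Asplund function `x ↦ (‖x‖² - dist(x, A)²) / 2`. For closed nonempty `A` it equals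
`sup_{a ∈ A} (⟪x, a⟫ - ‖a‖² / 2)`, it is
convex and its subdifferential is `x ↦ conv P_A(x)`. -/
noncomputable def asplund (A : Set E) (x : E) : ℝ := (‖x‖ ^ 2 - infDist x A ^ 2) / 2

theorem continuous_asplund (A : Set E) : Continuous (asplund A) := by
  unfold asplund
  have := continuous_infDist_pt A
  fun_prop

theorem le_asplund {A : Set E} {a : E} (ha : a ∈ A) (x : E) :
    inner ℝ x a - ‖a‖ ^ 2 / 2 ≤ asplund A x := by
  have h1 : infDist x A ≤ ‖x - a‖ := by rw [← dist_eq_norm]; exact infDist_le_dist_of_mem ha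
  have h2 : infDist x A ^ 2 ≤ ‖x - a‖ ^ 2 := pow_le_pow_left₀ infDist_nonneg h1 2
  rw [norm_sub_sq_real] at h2
  unfold asplund
  linarith

theorem asplund_eq {A : Set E} {x a : E} (ha : a ∈ nearestPts A x) :
    asplund A x = inner ℝ x a - ‖a‖ ^ 2 / 2 := by
  unfold asplund
  rw [← ha.2, dist_eq_norm, norm_sub_sq_real]
  ring

theorem nearestPts_nonempty [ProperSpace E] {A : Set E} (hA : IsClosed A) (hne : A.Nonempty)
    (x : E) : (nearestPts A x).Nonempty := by
  obtain ⟨a, ha, h⟩ := hA.exists_infDist_eq_dist hne x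
  exact ⟨a, ha, h.symm⟩

theorem isCompact_nearestPts [ProperSpace E] {A : Set E} (hA : IsClosed A) (x : E) :
    IsCompact (nearestPts A x) := by
  have : nearestPts A x = A ∩ sphere x (infDist x A) := by
    ext a
    rw [nearestPts, Set.mem_inter_iff, mem_sphere, dist_comm a x]
    rfl
  rw [this]
  exact (isCompact_sphere _ _).inter_left hA

theorem mem_nearestPts_of_tendsto {A : Set E} (hA : IsClosed A) {ι : Type*} {l : Filter ι}
    [l.NeBot] {y p : ι → E} {x q : E} (hy : Tendsto y l (𝓝 x)) (hp : Tendsto p l (𝓝 q))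
    (h : ∀ n, p n ∈ nearestPts A (y n)) : q ∈ nearestPts A x := by
  refine ⟨hA.mem_of_tendsto hp (Eventually.of_forall fun n => (h n).1), ?_⟩
  refine tendsto_nhds_unique (hy.dist hp) ?_
  simp_rw [fun n => (h n).2]
  exact ((continuous_infDist_pt A).tendsto x).comp hy

theorem exists_subseq_nearestPts [ProperSpace E] {A : Set E} (hA : IsClosed A)
    {y p : ℕ → E} {x : E} (hy : Tendsto y atTop (𝓝 x)) (h : ∀ n, p n ∈ nearestPts A (y n)) :
    ∃ q ∈ nearestPts A x, ∃ φ : ℕ → ℕ, StrictMono φ ∧ Tendsto (p ∘ φ) atTop (𝓝 q) := by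
  obtain ⟨C, hC⟩ := (isBounded_iff_subset_closedBall x).1 (isBounded_range_of_tendsto y hy)
  have hb : ∀ n, p n ∈ closedBall x (C + (infDist x A + C)) := by
    intro n
    have h1 : dist (y n) x ≤ C := hC ⟨n, rfl⟩
    have h2 : infDist (y n) A ≤ infDist x A + dist (y n) x := infDist_le_infDist_add_dist
    have h3 := (h n).2
    have h4 := dist_triangle (p n) (y n) x
    rw [dist_comm (p n) (y n)] at h4
    rw [mem_closedBall]
    linarith
  obtain ⟨q, -, φ, hφ, hq⟩ := tendsto_subseq_of_bounded isBounded_closedBall hb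
  exact ⟨q, mem_nearestPts_of_tendsto hA (hy.comp hφ.tendsto_atTop) hq fun n => h _, φ, hφ, hq⟩

/-- Points of `conv P_A(x)` are subgradients of the Asplund function. -/
theorem subgradient_of_mem {A : Set E} {x v : E} (hv : v ∈ convexHull ℝ (nearestPts A x)) (y : E) :
    asplund A x + inner ℝ v (y - x) ≤ asplund A y := by
  have hconv : Convex ℝ {w : E | inner ℝ (y - x) w ≤ asplund A y - asplund A x} :=
    convex_halfSpace_le (innerSL ℝ (y - x)).toLinearMap.isLinear _
  have hsub : nearestPts A x ⊆ {w : E | inner ℝ (y - x) w ≤ asplund A y - asplund A x} := by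
    intro a ha
    have h1 := asplund_eq ha
    have h2 := le_asplund ha.1 y
    rw [Set.mem_ofPred_eq, inner_sub_left]
    linarith
  have := convexHull_min hsub hconv hv
  rw [Set.mem_ofPred_eq, real_inner_comm] at this
  linarith

/-- A local subgradient up to a quadratic error lies in `conv P_A(x)`. Otherwise a hyperplane
strictly separates it from the compact set `conv P_A(x)`, and moving from `x` in the normal
direction `w` produces nearest points that accumulate at a point of `P_A(x)` on the wrong side. -/
theorem mem_of_subgradient [FiniteDimensional ℝ E] {A : Set E} (hA : IsClosed A)
    (hne : A.Nonempty) {x v : E} {C : ℝ}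
    (h : ∀ᶠ y in 𝓝 x, asplund A x + inner ℝ v (y - x) - C * ‖y - x‖ ^ 2 ≤ asplund A y) :
    v ∈ convexHull ℝ (nearestPts A x) := by
  have : ProperSpace E := FiniteDimensional.proper_real E
  by_contra hv
  obtain ⟨f, u, hfu, huv⟩ := geometric_hahn_banach_closed_point (convex_convexHull ℝ _)
    (isCompact_convexHull_of_finiteDimensional (isCompact_nearestPts hA x)).isClosed hv
  obtain ⟨w, rfl⟩ := (InnerProductSpace.toDual ℝ E).surjective f
  simp only [InnerProductSpace.toDual_apply_apply] at hfu huv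
  have ht : Tendsto (fun n : ℕ => 1 / ((n : ℝ) + 1)) atTop (𝓝 0) :=
    tendsto_one_div_add_atTop_nhds_zero_nat
  have hy : Tendsto (fun n : ℕ => x + (1 / ((n : ℝ) + 1)) • w) atTop (𝓝 x) := by
    simpa using (tendsto_const_nhds (x := x)).add (ht.smul_const w)
  choose p hp using fun n : ℕ => nearestPts_nonempty hA hne (x + (1 / ((n : ℝ) + 1)) • w)
  obtain ⟨q, hq, φ, hφ, hpq⟩ := exists_subseq_nearestPts hA hy hp
  have key : ∀ᶠ n : ℕ in atTop,
      inner ℝ w v - C * (1 / ((n : ℝ) + 1)) * ‖w‖ ^ 2 ≤ inner ℝ w (p n) := by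
    filter_upwards [hy.eventually h] with n hn
    have htpos : 0 < 1 / ((n : ℝ) + 1) := by positivity
    set t := 1 / ((n : ℝ) + 1)
    have h1 := asplund_eq (hp n)
    have h2 := le_asplund (hp n).1 x
    rw [h1, add_sub_cancel_left, norm_smul, Real.norm_of_nonneg htpos.le, inner_add_left,
      inner_smul_left, inner_smul_right, real_inner_comm] at hn
    simp only [conj_trivial] at hn
    have h3 : t * (inner ℝ w v - C * t * ‖w‖ ^ 2) ≤ t * inner ℝ w (p n) := by
      nlinarith
    exact le_of_mul_le_mul_left h3 htpos
  have hlim : Tendsto (fun n : ℕ => inner ℝ w v - C * (1 / ((n : ℝ) + 1)) * ‖w‖ ^ 2) atTop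
      (𝓝 (inner ℝ w v)) := by
    simpa using ((ht.const_mul C).mul_const (‖w‖ ^ 2)).const_sub (inner ℝ w v)
  have hle : inner ℝ w v ≤ inner ℝ w q :=
    le_of_tendsto_of_tendsto (hlim.comp hφ.tendsto_atTop)
      ((tendsto_const_nhds (x := w)).inner hpq) (hφ.tendsto_atTop.eventually key)
  have := hfu q (subset_convexHull ℝ _ hq)
  linarith

/-! ### Convergence of distances -/

theorem tendsto_infDist [ProperSpace E] {Xs : ℕ → Set E} {X : Set E} (hXs : ∀ n, IsClosed (Xs n))
    (hX : IsClosed X) (hXne : X.Nonempty) (hK : KConv Xs X) {φ : ℕ → ℕ}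
    (hφ : Tendsto φ atTop atTop) {y : ℕ → E} {x : E} (hy : Tendsto y atTop (𝓝 x)) :
    Tendsto (fun k => infDist (y k) (Xs (φ k))) atTop (𝓝 (infDist x X)) := by
  obtain ⟨a, ha, hax⟩ := nearestPts_nonempty hX hXne x
  obtain ⟨s, hs, hsa⟩ : a ∈ KLiminf Xs := hK.1.symm ▸ ha
  have hpt : Tendsto (fun n => infDist x (Xs n)) atTop (𝓝 (infDist x X)) := by
    have hupper : Tendsto (fun n => dist x (s n)) atTop (𝓝 (infDist x X)) :=
      hax ▸ tendsto_const_nhds.dist hsa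
    refine tendsto_of_subseq_tendsto fun ns hns => ?_
    obtain ⟨α, -, hα⟩ := strictMono_subseq_of_tendsto_atTop hns
    choose p hp using fun n => nearestPts_nonempty (hXs n) ⟨s n, hs n⟩ x
    obtain ⟨C, hC⟩ := (isBounded_iff_subset_closedBall (infDist x X)).1
      (isBounded_range_of_tendsto _ hupper)
    have hle : ∀ n, dist x (p n) ≤ dist x (s n) := fun n =>
      (hp n).2 ▸ infDist_le_dist_of_mem (hs n)
    have hb : ∀ k, p (ns (α k)) ∈ closedBall x (infDist x X + C) := by
      intro k
      have h1 : dist (dist x (s (ns (α k)))) (infDist x X) ≤ C := hC ⟨_, rfl⟩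
      have h2 := (abs_le.1 (Real.dist_eq _ _ ▸ h1)).2
      rw [mem_closedBall, dist_comm]
      linarith [hle (ns (α k))]
    obtain ⟨q, -, β, hβ, hq⟩ := tendsto_subseq_of_bounded isBounded_closedBall hb
    have hqX : q ∈ X := by
      rw [← hK.2]
      exact ⟨_, hα.comp hβ, _, fun k => (hp _).1, hq⟩
    have hlim := (tendsto_const_nhds (x := x)).dist hq
    have hle' : dist x q ≤ infDist x X :=
      le_of_tendsto_of_tendsto' hlim (hupper.comp (hα.comp hβ).tendsto_atTop) fun k => hle _
    refine ⟨α ∘ β, ?_⟩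
    rw [le_antisymm (infDist_le_dist_of_mem hqX) hle']
    simpa [← (hp _).2] using! hlim
  have h1 : Tendsto (fun k => dist (y k) x) atTop (𝓝 0) := tendsto_iff_dist_tendsto_zero.1 hy
  have h2 : Tendsto (fun k => infDist (y k) (Xs (φ k)) - infDist x (Xs (φ k))) atTop (𝓝 0) := by
    refine squeeze_zero_norm (fun k => ?_) h1
    have := (lipschitz_infDist_pt (Xs (φ k))).dist_le_mul (y k) x
    simpa [Real.dist_eq] using this
  simpa using h2.add (hpt.comp hφ)

theorem tendsto_asplund [ProperSpace E] {Xs : ℕ → Set E} {X : Set E} (hXs : ∀ n, IsClosed (Xs n))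
    (hX : IsClosed X) (hXne : X.Nonempty) (hK : KConv Xs X) {φ : ℕ → ℕ}
    (hφ : Tendsto φ atTop atTop) {y : ℕ → E} {x : E} (hy : Tendsto y atTop (𝓝 x)) :
    Tendsto (fun k => asplund (Xs (φ k)) (y k)) atTop (𝓝 (asplund X x)) :=
  ((hy.norm.pow 2).sub ((tendsto_infDist hXs hX hXne hK hφ hy).pow 2)).div_const 2

/-! ### Graphical convergence of `conv P` -/

theorem kConv_of_subset {α : Type*} [TopologicalSpace α] {A : ℕ → Set α} {L : Set α}
    (h1 : L ⊆ KLiminf A) (h2 : KLimsup A ⊆ L) : KConv A L := by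
  have h : KLiminf A ⊆ KLimsup A := fun x ⟨u, hu, hux⟩ => ⟨id, strictMono_id, u, hu, hux⟩
  exact ⟨(h.trans h2).antisymm h1, h2.antisymm (h1.trans h)⟩

theorem KConv.image_homeomorph {α β : Type*} [TopologicalSpace α] [TopologicalSpace β]
    (e : α ≃ₜ β) {A : ℕ → Set α} {L : Set α} (h : KConv A L) :
    KConv (fun n => e.symm ⁻¹' A n) (e.symm ⁻¹' L) := by
  apply kConv_of_subset
  · intro y hy
    obtain ⟨u, hu, hux⟩ : e.symm y ∈ KLiminf A := h.1.symm ▸ hy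
    exact ⟨e ∘ u, fun n => by simpa using hu n, by
      simpa using (e.continuous.tendsto _).comp hux⟩
  · rintro y ⟨φ, hφ, u, hu, huy⟩
    rw [Set.mem_preimage, ← h.2]
    exact ⟨φ, hφ, e.symm ∘ u, hu, (e.symm.continuous.tendsto _).comp huy⟩

/-- Given `v ∈ conv P_X(x)`, the functions
`y ↦ asplund (Xs n) y - ⟪v, y⟫ + ‖y - x‖² / 2` have minimizers `y n` over the unit ball around `x`.
They converge to `x`, the unique minimizer of the limit function; once they are interior points,
`v - (y n - x)` is a subgradient of `asplund (Xs n)` at `y n`. -/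
theorem graph_subset_kLiminf [FiniteDimensional ℝ E] {Xs : ℕ → Set E} {X : Set E}
    (hXs : ∀ n, IsClosed (Xs n)) (hX : IsClosed X) (hXne : X.Nonempty) (hK : KConv Xs X) :
    mgraph Set.univ (fun x => convexHull ℝ (nearestPts X x)) ⊆
      KLiminf (fun n => mgraph Set.univ (fun x => convexHull ℝ (nearestPts (Xs n) x))) := by
  have : ProperSpace E := FiniteDimensional.proper_real E
  rintro ⟨x, v⟩ ⟨-, hv⟩
  replace hv : v ∈ convexHull ℝ (nearestPts X x) := hv
  have hne : ∀ n, (Xs n).Nonempty := by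
    obtain ⟨a, ha⟩ := hXne
    obtain ⟨s, hs, -⟩ : a ∈ KLiminf Xs := hK.1.symm ▸ ha
    exact fun n => ⟨s n, hs n⟩
  have hmin : ∀ n, ∃ y ∈ closedBall x 1, ∀ z ∈ closedBall x 1,
      asplund (Xs n) y - inner ℝ v y + ‖y - x‖ ^ 2 / 2 ≤
        asplund (Xs n) z - inner ℝ v z + ‖z - x‖ ^ 2 / 2 := by
    intro n
    have hc : Continuous fun y => asplund (Xs n) y - inner ℝ v y + ‖y - x‖ ^ 2 / 2 := by
      have := continuous_asplund (Xs n)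
      fun_prop
    exact (isCompact_closedBall x 1).exists_isMinOn ⟨x, by simp⟩ hc.continuousOn
  choose y hyb hymin using hmin
  have hyx : Tendsto y atTop (𝓝 x) := by
    refine tendsto_of_subseq_tendsto fun ns hns => ?_
    obtain ⟨z, -, β, hβ, hz⟩ := tendsto_subseq_of_bounded isBounded_closedBall
      (fun k => hyb (ns k))
    refine ⟨β, ?_⟩
    have hlim := hns.comp hβ.tendsto_atTop
    have h1 : Tendsto (fun k => asplund (Xs (ns (β k))) (y (ns (β k)))) atTop
      (𝓝 (asplund X z)) := tendsto_asplund hXs hX hXne hK hlim hz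
    have h2 : Tendsto (fun k => asplund (Xs (ns (β k))) x) atTop
      (𝓝 (asplund X x)) := tendsto_asplund hXs hX hXne hK hlim tendsto_const_nhds
    have h3 : asplund X z - inner ℝ v z + ‖z - x‖ ^ 2 / 2 ≤ asplund X x - inner ℝ v x := by
      refine le_of_tendsto_of_tendsto'
        ((h1.sub ((tendsto_const_nhds (x := v)).inner hz)).add
          (((hz.sub_const x).norm.pow 2).div_const 2))
        (h2.sub_const (inner ℝ v x)) fun k => ?_
      simpa using hymin (ns (β k)) x (by simp)
    have h4 := subgradient_of_mem hv z
    rw [inner_sub_right] at h4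
    have h5 : ‖z - x‖ ^ 2 = 0 := le_antisymm (by linarith) (by positivity)
    have h6 : z = x := sub_eq_zero.1 (norm_eq_zero.1 (pow_eq_zero_iff two_ne_zero |>.1 h5))
    exact h6 ▸ hz
  have hgood : ∀ᶠ n in atTop, v - (y n - x) ∈ convexHull ℝ (nearestPts (Xs n) (y n)) := by
    filter_upwards [hyx.eventually (ball_mem_nhds x one_pos)] with n hn
    refine mem_of_subgradient (hXs n) (hne n) (C := 1 / 2) ?_
    filter_upwards [isOpen_ball.mem_nhds hn] with z hz
    have h1 := hymin n z (ball_subset_closedBall hz)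
    have h2 : ‖z - x‖ ^ 2 = ‖z - y n‖ ^ 2 + 2 * inner ℝ (y n - x) (z - y n) + ‖y n - x‖ ^ 2 := by
      rw [← sub_add_sub_cancel z (y n) x, norm_add_sq_real, real_inner_comm]
    rw [inner_sub_left, inner_sub_right v]
    linarith
  choose p hp using fun n => nearestPts_nonempty (hXs n) (hne n) (y n)
  classical
  -- Finitely many indices lie outside `hgood`; any point of the graph serves there.
  refine ⟨fun n => (y n, if v - (y n - x) ∈ convexHull ℝ (nearestPts (Xs n) (y n)) then
    v - (y n - x) else p n), fun n => ⟨trivial, ?_⟩, hyx.prodMk_nhds ?_⟩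
  · dsimp only
    split_ifs with h
    · exact h
    · exact subset_convexHull ℝ _ (hp n)
  · have h1 : Tendsto (fun n => v - (y n - x)) atTop (𝓝 v) := by
      simpa using (hyx.sub_const x).const_sub v
    refine h1.congr' ?_
    filter_upwards [hgood] with n hn
    rw [if_pos hn]

theorem kConv_graph [FiniteDimensional ℝ E] {Xs : ℕ → Set E} {X : Set E}
    (hXs : ∀ n, IsClosed (Xs n)) (hX : IsClosed X) (hXne : X.Nonempty) (hK : KConv Xs X) :
    KConv (fun n => mgraph Set.univ (fun x => convexHull ℝ (nearestPts (Xs n) x)))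
      (mgraph Set.univ (fun x => convexHull ℝ (nearestPts X x))) := by
  have : ProperSpace E := FiniteDimensional.proper_real E
  refine kConv_of_subset (graph_subset_kLiminf hXs hX hXne hK) ?_
  rintro ⟨x, v⟩ ⟨φ, hφ, u, hu, hux⟩
  refine ⟨trivial, mem_of_subgradient hX hXne (C := 0) (Eventually.of_forall fun z => ?_)⟩
  have h1 : Tendsto (fun k => (u k).1) atTop (𝓝 x) := (continuous_fst.tendsto _).comp hux
  have h2 : Tendsto (fun k => (u k).2) atTop (𝓝 v) := (continuous_snd.tendsto _).comp hux
  have h3 := tendsto_asplund hXs hX hXne hK hφ.tendsto_atTop h1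
  have h4 := tendsto_asplund hXs hX hXne hK hφ.tendsto_atTop (tendsto_const_nhds (x := z))
  have := le_of_tendsto_of_tendsto' (h3.add (h2.inner (h1.const_sub z))) h4
    fun k => subgradient_of_mem (hu k).2 z
  simpa using this

/-! ### The Clarke subdifferential of the squared distance -/

/-- Where `dist(·, A)²` is differentiable, its derivative is that of `z ↦ ‖z - p‖²` for any nearest
point `p`, because the latter function lies above it and touches it there. -/
theorem fderiv_sq_infDist {A : Set E} {y p : E} (hp : p ∈ nearestPts A y)
    (hd : DifferentiableAt ℝ (fun z => infDist z A ^ 2) y) :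
    fderiv ℝ (fun z => infDist z A ^ 2) y = innerSL ℝ ((2 : ℝ) • (y - p)) := by
  have hq : HasFDerivAt (fun z : E => ‖z - p‖ ^ 2) (innerSL ℝ ((2 : ℝ) • (y - p))) y := by
    have := ((hasFDerivAt_id (𝕜 := ℝ) y).sub_const p).norm_sq
    refine HasFDerivAt.congr_fderiv this ?_
    ext w
    simp
  have hmin : IsLocalMin ((fun z : E => ‖z - p‖ ^ 2) - fun z => infDist z A ^ 2) y := by
    refine Eventually.of_forall fun z => ?_
    have h1 : infDist z A ≤ ‖z - p‖ := by
      rw [← dist_eq_norm]; exact infDist_le_dist_of_mem hp.1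
    have h2 : infDist y A = ‖y - p‖ := by rw [← dist_eq_norm]; exact hp.2.symm
    have h3 := pow_le_pow_left₀ infDist_nonneg h1 2
    simp only [Pi.sub_apply, h2]
    linarith
  have := hmin.hasFDerivAt_eq_zero (hq.sub hd.hasFDerivAt)
  exact (sub_eq_zero.1 this).symm

/-- On the segment from `x` to a nearest point `p`, apart from `x` itself, `p` is the only candidate
for a nearest point. -/
theorem nearestPts_segment {A : Set E} {x p : E} (hp : p ∈ nearestPts A x) {t : ℝ} (ht0 : 0 < t)
    (ht1 : t ≤ 1) {q : E} (hq : q ∈ nearestPts A (x + t • (p - x))) : q = p := by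
  have h1 : ‖x - p‖ ^ 2 ≤ ‖x - q‖ ^ 2 := by
    have : ‖x - p‖ ≤ ‖x - q‖ := by
      rw [← dist_eq_norm, ← dist_eq_norm, hp.2]; exact infDist_le_dist_of_mem hq.1
    gcongr
  have h2 : ‖x + t • (p - x) - q‖ ^ 2 ≤ ‖x + t • (p - x) - p‖ ^ 2 := by
    have : ‖x + t • (p - x) - q‖ ≤ ‖x + t • (p - x) - p‖ := by
      rw [← dist_eq_norm, ← dist_eq_norm, hq.2]; exact infDist_le_dist_of_mem hp.1
    gcongr
  have e1 : x + t • (p - x) - q = (x - q) - t • (x - p) := by module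
  have e2 : x + t • (p - x) - p = (1 - t) • (x - p) := by module
  have e3 : p - q = (x - q) - (x - p) := by module
  have h3 : ‖p - q‖ ^ 2 = ‖x - q‖ ^ 2 - 2 * inner ℝ (x - q) (x - p) + ‖x - p‖ ^ 2 := by
    rw [e3, norm_sub_sq_real]
  rw [e1, e2, norm_sub_sq_real, norm_smul, norm_smul, mul_pow, mul_pow, inner_smul_right,
    Real.norm_eq_abs, Real.norm_eq_abs, sq_abs, sq_abs] at h2
  have h4 : t * ‖p - q‖ ^ 2 ≤ 0 := by
    rw [h3]
    nlinarith [mul_le_mul_of_nonneg_left h1 (sub_nonneg.2 ht1)]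
  have h5 : ‖p - q‖ ^ 2 ≤ 0 := nonpos_of_mul_nonpos_right h4 ht0
  have h6 : ‖p - q‖ = 0 := pow_eq_zero_iff two_ne_zero |>.1 (le_antisymm h5 (by positivity))
  exact (sub_eq_zero.1 (norm_eq_zero.1 h6)).symm

/-- If `p` is the only nearest point to `y`, every selection `P` of nearest points is continuous at
`y`, and `0 ≤ φ_A(z) - φ_A(y) - ⟪p, z - y⟫ ≤ ⟪P z - p, z - y⟫ = o(‖z - y‖)` for `φ_A = asplund A`. -/
theorem differentiableAt_sq_infDist [ProperSpace E] {A : Set E} (hA : IsClosed A) {y p : E}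
    (hp : p ∈ nearestPts A y) (huniq : ∀ q ∈ nearestPts A y, q = p) :
    DifferentiableAt ℝ (fun z => infDist z A ^ 2) y := by
  choose P hP using nearestPts_nonempty hA ⟨p, hp.1⟩
  have hPc : Tendsto P (𝓝 y) (𝓝 p) := by
    refine tendsto_of_subseq_tendsto fun ns hns => ?_
    obtain ⟨q, hq, φ, -, hpq⟩ := exists_subseq_nearestPts hA hns fun n => hP (ns n)
    exact ⟨φ, huniq q hq ▸ hpq⟩
  have hder : HasFDerivAt (asplund A) (innerSL ℝ p) y := by
    rw [hasFDerivAt_iff_isLittleO, Asymptotics.isLittleO_iff]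
    intro c hc
    filter_upwards [hPc.eventually (closedBall_mem_nhds p hc)] with z hz
    have h1 := le_asplund hp.1 z
    have h2 := asplund_eq hp
    have h3 := asplund_eq (hP z)
    have h4 := le_asplund (hP z).1 y
    have h5 : inner ℝ (P z - p) (z - y) ≤ ‖P z - p‖ * ‖z - y‖ := real_inner_le_norm _ _
    have h6 : ‖P z - p‖ * ‖z - y‖ ≤ c * ‖z - y‖ := by
      rw [dist_eq_norm] at hz
      gcongr
    have h7 : inner ℝ (P z - p) (z - y) =
        inner ℝ z (P z) - inner ℝ y (P z) - inner ℝ p (z - y) := by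
      rw [inner_sub_left, inner_sub_right, real_inner_comm, real_inner_comm y]
    have h8 : inner ℝ p (z - y) = inner ℝ z p - inner ℝ y p := by
      rw [inner_sub_right, real_inner_comm, real_inner_comm y]
    rw [innerSL_apply_apply, Real.norm_eq_abs, abs_le]
    constructor <;> nlinarith [norm_nonneg (z - y)]
  have heq : (fun z => infDist z A ^ 2) = fun z => ‖z‖ ^ 2 - 2 * asplund A z := by
    funext z; unfold asplund; ring
  rw [heq]
  exact (differentiableAt_id.norm_sq ℝ).sub (hder.differentiableAt.const_mul 2)

end helpers

/-- The homeomorphism `(x, v) ↦ (x, 2⟪x - v, ·⟫)`, which carries the graph of `conv P_A` to that of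
the Clarke subdifferential of `dist(·, A)²`. -/
noncomputable def gradHomeo (p : ℕ) :
    EuclideanSpace ℝ (Fin p) × EuclideanSpace ℝ (Fin p) ≃ₜ
      EuclideanSpace ℝ (Fin p) × (EuclideanSpace ℝ (Fin p) →L[ℝ] ℝ) where
  toFun q := (q.1, InnerProductSpace.toDual ℝ _ ((2 : ℝ) • (q.1 - q.2)))
  invFun q := (q.1, q.1 - (2 : ℝ)⁻¹ • (InnerProductSpace.toDual ℝ _).symm q.2)
  left_inv q := by ext1 <;> simp
  right_inv q := by ext1 <;> simp
  continuous_toFun := by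
    refine continuous_fst.prodMk ((InnerProductSpace.toDual ℝ _).continuous.comp ?_)
    fun_prop
  continuous_invFun := by
    refine continuous_fst.prodMk (continuous_fst.sub ?_)
    exact ((InnerProductSpace.toDual ℝ _).symm.continuous.comp continuous_snd).const_smul (2 : ℝ)⁻¹

theorem clarke_sq_infDist {p : ℕ} {A : Set (EuclideanSpace ℝ (Fin p))} (hA : IsClosed A)
    (hne : A.Nonempty) (x : EuclideanSpace ℝ (Fin p)) :
    clarke Set.univ (fun y => infDist y A ^ 2) x =
      (fun v => InnerProductSpace.toDual ℝ _ ((2 : ℝ) • (x - v))) ''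
        convexHull ℝ (nearestPts A x) := by
  let g : EuclideanSpace ℝ (Fin p) →ᵃ[ℝ] (EuclideanSpace ℝ (Fin p) →L[ℝ] ℝ) :=
    { toFun := fun v => InnerProductSpace.toDual ℝ _ ((2 : ℝ) • (x - v))
      linear := -((2 : ℝ) • (innerSL ℝ).toLinearMap)
      map_vadd' := fun v w => by
        ext z
        simp
        ring }
  have hg := g.image_convexHull (nearestPts A x)
  change _ = g '' _
  rw [hg, clarke]
  congr 1
  ext u
  constructor
  · rintro ⟨y, -, hd, hy, hu⟩
    choose P hP using fun n => nearestPts_nonempty hA hne (y n)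
    obtain ⟨q, hq, φ, hφ, hpq⟩ := exists_subseq_nearestPts hA hy hP
    refine ⟨q, hq, ?_⟩
    refine tendsto_nhds_unique ?_ (hu.comp hφ.tendsto_atTop)
    have : Tendsto (fun k => InnerProductSpace.toDual ℝ _ ((2 : ℝ) • (y (φ k) - P (φ k)))) atTop
        (𝓝 (g q)) :=
      ((InnerProductSpace.toDual ℝ _).continuous.tendsto _).comp
        (((hy.comp hφ.tendsto_atTop).sub hpq).const_smul (2 : ℝ))
    refine this.congr fun k => ?_
    exact (fderiv_sq_infDist (hP (φ k)) (hd (φ k))).symm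
  · rintro ⟨a, ha, rfl⟩
    have ht : Tendsto (fun n : ℕ => 1 / ((n : ℝ) + 1)) atTop (𝓝 0) :=
      tendsto_one_div_add_atTop_nhds_zero_nat
    have hy : Tendsto (fun n : ℕ => x + (1 / ((n : ℝ) + 1)) • (a - x)) atTop (𝓝 x) := by
      simpa using (tendsto_const_nhds (x := x)).add (ht.smul_const (a - x))
    have huniq : ∀ n : ℕ, ∀ q ∈ nearestPts A (x + (1 / ((n : ℝ) + 1)) • (a - x)), q = a := by
      intro n q hq
      refine nearestPts_segment ha (by positivity) ?_ hq
      rw [div_le_one (by positivity)]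
      linarith [n.cast_nonneg (α := ℝ)]
    have hmem : ∀ n : ℕ, a ∈ nearestPts A (x + (1 / ((n : ℝ) + 1)) • (a - x)) := by
      intro n
      obtain ⟨q, hq⟩ := nearestPts_nonempty hA hne (x + (1 / ((n : ℝ) + 1)) • (a - x))
      exact huniq n q hq ▸ hq
    have hd := fun n : ℕ => differentiableAt_sq_infDist hA (hmem n) (huniq n)
    refine ⟨_, fun _ => trivial, hd, hy, ?_⟩
    have : Tendsto (fun n : ℕ => InnerProductSpace.toDual ℝ _
        ((2 : ℝ) • ((x + (1 / ((n : ℝ) + 1)) • (a - x)) - a))) atTop (𝓝 (g a)) :=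
      ((InnerProductSpace.toDual ℝ _).continuous.tendsto _).comp
        ((hy.sub_const a).const_smul (2 : ℝ))
    exact this.congr fun n => (fderiv_sq_infDist (hmem n) (hd n)).symm

theorem graph_clarke_eq {p : ℕ} {A : Set (EuclideanSpace ℝ (Fin p))} (hA : IsClosed A)
    (hne : A.Nonempty) :
    mgraph Set.univ (clarke Set.univ (fun y => infDist y A ^ 2)) =
      (gradHomeo p).symm ⁻¹' mgraph Set.univ (fun x => convexHull ℝ (nearestPts A x)) := by
  rw [← Homeomorph.image_eq_preimage_symm]
  ext ⟨x, u⟩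
  simp only [mgraph, clarke_sq_infDist hA hne, Set.mem_univ, true_and, Set.mem_image,
    Set.mem_ofPred_eq, Prod.exists]
  constructor
  · rintro ⟨v, hv, rfl⟩
    exact ⟨x, v, hv, rfl⟩
  · rintro ⟨x', v, hv, h⟩
    obtain ⟨rfl, rfl⟩ := Prod.mk.inj h
    exact ⟨v, hv, rfl⟩

/-- in the plane, Painlevé–Kuratowski convergence of closed sets
`X_n → X` (with `X` nonempty) implies graphical convergence of the Clarke
subdifferentials of the squared distance functions, equivalently of the
multifunctions `x ↦ conv P_{X_n}(x)`. -/
theorem stmt_11 (Xs : ℕ → Set (EuclideanSpace ℝ (Fin 2)))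
    (hXs : ∀ n, IsClosed (Xs n))
    (X : Set (EuclideanSpace ℝ (Fin 2))) (hXne : X.Nonempty) (hXcl : IsClosed X)
    (hK : KConv Xs X) :
    KConv (fun n => mgraph Set.univ (clarke Set.univ (fun y => (infDist y (Xs n)) ^ 2)))
        (mgraph Set.univ (clarke Set.univ (fun y => (infDist y X) ^ 2))) ∧
      KConv (fun n => mgraph Set.univ (fun x => convexHull ℝ (nearestPts (Xs n) x)))
        (mgraph Set.univ (fun x => convexHull ℝ (nearestPts X x))) := by
  have hne : ∀ n, (Xs n).Nonempty := by
    obtain ⟨a, ha⟩ := hXne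
    obtain ⟨s, hs, -⟩ : a ∈ KLiminf Xs := hK.1.symm ▸ ha
    exact fun n => ⟨s n, hs n⟩
  have h := kConv_graph hXs hXcl hXne hK
  refine ⟨?_, h⟩
  simp_rw [graph_clarke_eq hXcl hXne, fun n => graph_clarke_eq (hXs n) (hne n)]
  exact h.image_homeomorph (gradHomeo 2)
end

section
/- (Zarankiewicz) Let X be a second countable metric space and let E_n (n ∈ ℕ) be an arbitrary sequence of subsets of X. Then there exists a subsequence E_{k_n} that converges in the Painlevé–Kuratowski sense to some (closed) subset E of X. -/
/-!
Encode each set by its "hitting pattern": the function sending a member `U` of a countable basis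
to the truth value of "`U` meets the set". The patterns live in the compact metrizable space
`countableBasis X → Bool`, so a subsequence of them converges to some `g`: along it, each basic
open set is either eventually met or eventually missed. The limit set is then the set of points
all of whose basic neighbourhoods are eventually met.

The lower limit requires approximating points in *every* set of the sequence, so empty sets
matter: if infinitely many of the sets are empty, a subsequence of empty sets converges to `∅`;
otherwise the finitely many empty sets are dropped first.
-/

open Filter Topology Metric MeasureTheory

lemma KLiminf_subset_KLimsup {α : Type*} [TopologicalSpace α] (A : ℕ → Set α) :
    KLiminf A ⊆ KLimsup A :=
  fun _ ⟨u, hu, hx⟩ => ⟨id, strictMono_id, u, hu, hx⟩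

/-- For nonempty sets, a point all of whose neighbourhoods eventually meet `A n` is in the lower
limit: approximating points are found almost realizing the distance to `A n`. -/
lemma mem_KLiminf_of_eventually {X : Type*} [MetricSpace X] {A : ℕ → Set X}
    (hA : ∀ n, (A n).Nonempty) {x : X}
    (h : ∀ ε > 0, ∀ᶠ n in atTop, (A n ∩ ball x ε).Nonempty) : x ∈ KLiminf A := by
  have hdist : ∀ n : ℕ, ∃ y ∈ A n, dist x y < infDist x (A n) + 1 / ((n : ℝ) + 1) := fun n =>
    (infDist_lt_iff (hA n)).1 (lt_add_of_pos_right _ Nat.one_div_pos_of_nat)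
  choose u hu hux using hdist
  refine ⟨u, hu, ?_⟩
  have hinf : Tendsto (fun n => infDist x (A n)) atTop (𝓝 0) := by
    rw [Metric.tendsto_nhds]
    intro ε hε
    filter_upwards [h ε hε] with n hn
    obtain ⟨y, hy, hyx⟩ := hn
    rw [Real.dist_0_eq_abs, abs_of_nonneg infDist_nonneg]
    exact (infDist_le_dist_of_mem hy).trans_lt (by rwa [dist_comm])
  have hsum := hinf.add (tendsto_one_div_add_atTop_nhds_zero_nat (𝕜 := ℝ))
  rw [add_zero] at hsum
  rw [tendsto_iff_dist_tendsto_zero]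
  exact squeeze_zero (fun _ => dist_nonneg)
    (fun n => by rw [dist_comm]; exact (hux n).le) hsum

/-- The compactness argument, for sequences of nonempty sets. -/
lemma exists_KConv_of_nonempty {X : Type*} [MetricSpace X] [SecondCountableTopology X]
    (E : ℕ → Set X) (hE : ∀ n, (E n).Nonempty) :
    ∃ φ : ℕ → ℕ, StrictMono φ ∧
      ∃ S : Set X, IsClosed S ∧ KConv (fun n => E (φ n)) S := by
  classical
  let B := TopologicalSpace.countableBasis X
  have hB : TopologicalSpace.IsTopologicalBasis B :=
    TopologicalSpace.isBasis_countableBasis X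
  have : Countable B := (TopologicalSpace.countable_countableBasis X).to_subtype
  let f : ℕ → B → Bool := fun n U => decide ((E n ∩ U).Nonempty)
  obtain ⟨g, φ, hφ, hlim⟩ := CompactSpace.tendsto_subseq f
  have hev : ∀ U : B, ∀ᶠ n in atTop, f (φ n) U = g U := fun U => by
    have := (tendsto_pi_nhds.1 hlim) U
    rw [nhds_discrete, tendsto_pure] at this
    exact this
  let S : Set X := {x | ∀ U : B, x ∈ (U : Set X) → g U = true}
  have hclosed : IsClosed S := by
    have : S = ⋂ U : B, ⋂ _ : g U ≠ true, (U : Set X)ᶜ := by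
      ext x
      simp only [S, Set.mem_ofPred_eq, Set.mem_iInter, Set.mem_compl_iff]
      exact forall_congr' fun U => not_imp_not.symm
    rw [this]
    exact isClosed_iInter fun U => isClosed_iInter fun _ => (hB.isOpen U.2).isClosed_compl
  have hlow : S ⊆ KLiminf (fun n => E (φ n)) := by
    intro x hx
    refine mem_KLiminf_of_eventually (fun n => hE _) fun ε hε => ?_
    obtain ⟨U, hU, hxU, hUε⟩ := hB.mem_nhds_iff.1 (ball_mem_nhds x hε)
    filter_upwards [hev ⟨U, hU⟩] with n hn
    rw [hx ⟨U, hU⟩ hxU] at hn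
    exact (of_decide_eq_true hn).mono (Set.inter_subset_inter_right _ hUε)
  have hup : KLimsup (fun n => E (φ n)) ⊆ S := by
    rintro x ⟨ψ, hψ, u, hu, hux⟩ U hxU
    have h1 := hux.eventually ((hB.isOpen U.2).mem_nhds hxU)
    have h2 := hψ.tendsto_atTop.eventually (hev U)
    obtain ⟨n, hn1, hn2⟩ := (h1.and h2).exists
    rw [← hn2]
    exact decide_eq_true ⟨u n, hu n, hn1⟩
  have hmid := KLiminf_subset_KLimsup (fun n => E (φ n))
  exact ⟨φ, hφ, S, hclosed, (hmid.trans hup).antisymm hlow, hup.antisymm (hlow.trans hmid)⟩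

/-- Zarankiewicz: in a second countable metric space, every sequence of
sets admits a subsequence converging in the Painlevé–Kuratowski sense to some closed
set. -/
theorem stmt_15 {X : Type*} [MetricSpace X] [SecondCountableTopology X]
    (E : ℕ → Set X) :
    ∃ φ : ℕ → ℕ, StrictMono φ ∧
      ∃ S : Set X, IsClosed S ∧ KConv (fun n => E (φ n)) S := by
  by_cases h : ∃ᶠ n in atTop, E n = ∅
  · obtain ⟨φ, hφ, hempty⟩ := extraction_of_frequently_atTop h
    have hup : KLimsup (fun n => E (φ n)) ⊆ ∅ := by
      rintro x ⟨ψ, -, u, hu, -⟩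
      have := hu 0
      simp only [hempty] at this
      exact this
    exact ⟨φ, hφ, ∅, isClosed_empty,
      Set.subset_empty_iff.1 ((KLiminf_subset_KLimsup _).trans hup), Set.subset_empty_iff.1 hup⟩
  · obtain ⟨N, hN⟩ := eventually_atTop.1 (not_frequently.1 h)
    obtain ⟨φ, hφ, S, hS, hconv⟩ := exists_KConv_of_nonempty (fun n => E (n + N))
      fun n => Set.nonempty_iff_ne_empty.2 (hN _ (Nat.le_add_left N n))
    exact ⟨fun n => φ n + N, hφ.add_const N, S, hS, hconv⟩
end

section
/- Let X be a locally compact metric space and let {E_n} be a sequence of connected subsets of X converging in the Painlevé–Kuratowski sense to a nonempty compact set E ⊂ X. Then: (1) for every open neighbourhood Ω of E there exists N ∈ ℕ such that E_n ⊂ Ω for all n > N; and (2) there exists N ∈ ℕ such that the union ⋃_{n > N} E_n is relatively compact in X. -/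
/-!
Local compactness lets one squeeze a relatively compact open set `V` between the compact limit
`S` and any open `Ω ⊇ S`. The compact set `frontier V` is disjoint from the upper limit `S`, so
`E n` misses it for all large `n`; since the lower limit `S` is nonempty, `E n` meets `V` for all
large `n`. A connected set that meets `V` and misses its frontier lies inside `V`. This
containment (`eventually_subset_of_KConv`) gives both claims, the second by taking `Ω` to be the
whole space.
-/

open Filter Topology Metric MeasureTheory

/-- A compact set disjoint from the upper limit meets only finitely many of the sets. -/
theorem eventually_disjoint_of_KLimsup {X : Type*} [MetricSpace X] (E : ℕ → Set X)
    {K : Set X} (hK : IsCompact K) (hd : Disjoint (KLimsup E) K) :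
    ∀ᶠ n in atTop, Disjoint (E n) K := by
  by_contra hcon
  obtain ⟨φ, hφ, hmeet⟩ := extraction_of_frequently_atTop (not_eventually.mp hcon)
  choose u huE huK using fun k => Set.not_disjoint_iff.mp (hmeet k)
  obtain ⟨x, hxK, ψ, hψ, hlim⟩ := hK.tendsto_subseq huK
  have hx : x ∈ KLimsup E := ⟨φ ∘ ψ, hφ.comp hψ, u ∘ ψ, fun k => huE (ψ k), hlim⟩
  exact Set.disjoint_left.mp hd hx hxK

theorem eventually_subset_of_KConv {X : Type*} [MetricSpace X] (E : ℕ → Set X)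
    (hconn : ∀ n, IsConnected (E n)) {S : Set X} (hSne : S.Nonempty) (hK : KConv E S)
    {V : Set X} (hV : IsOpen V) (hSV : S ⊆ V) (hVc : IsCompact (closure V)) :
    ∃ N : ℕ, ∀ n > N, E n ⊆ V := by
  have hfr : IsCompact (frontier V) :=
    hVc.of_isClosed_subset isClosed_frontier frontier_subset_closure
  have hdisj : Disjoint (KLimsup E) (frontier V) := by
    rw [hK.2]
    exact (disjoint_frontier_iff_isOpen.mpr hV).symm.mono_left hSV
  obtain ⟨x, hx⟩ := hSne
  obtain ⟨u, huE, hlim⟩ : x ∈ KLiminf E := hK.1.symm ▸ hx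
  have hmeet : ∀ᶠ n in atTop, u n ∈ V := hlim.eventually (hV.mem_nhds (hSV hx))
  obtain ⟨N, hN⟩ := eventually_atTop.mp
    ((eventually_disjoint_of_KLimsup E hfr hdisj).and hmeet)
  refine ⟨N, fun n hn => ?_⟩
  obtain ⟨hmiss, hun⟩ := hN n hn.le
  -- Off the frontier, the space splits into the disjoint open sets `V` and `(closure V)ᶜ`.
  refine (hconn n).isPreconnected.subset_left_of_subset_union hV
    isClosed_closure.isOpen_compl (Set.disjoint_compl_right_iff_subset.mpr subset_closure) ?_
    ⟨u n, huE n, hun⟩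
  intro y hy
  by_cases hyV : y ∈ V
  · exact Or.inl hyV
  · refine Or.inr fun hyc => Set.disjoint_left.mp hmiss hy ?_
    rw [hV.frontier_eq]
    exact ⟨hyc, hyV⟩

/-- if connected subsets `E_n` of a locally compact metric space
converge in the Painlevé–Kuratowski sense to a nonempty compact set `E`, then (1)
every neighbourhood of `E` eventually contains all the `E_n`, and (2) some tail union
`⋃_{n > N} E_n` is relatively compact. -/
theorem stmt_18 {X : Type*} [MetricSpace X] [LocallyCompactSpace X]
    (E : ℕ → Set X) (hconn : ∀ n, IsConnected (E n))
    (S : Set X) (hScpt : IsCompact S) (hSne : S.Nonempty)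
    (hK : KConv E S) :
    (∀ Ω : Set X, IsOpen Ω → S ⊆ Ω → ∃ N : ℕ, ∀ n > N, E n ⊆ Ω) ∧
    (∃ N : ℕ, IsCompact (closure (⋃ n > N, E n))) := by
  constructor
  · intro Ω hΩ hSΩ
    obtain ⟨V, hV, hSV, hVΩ, hVc⟩ := exists_open_between_and_isCompact_closure hScpt hΩ hSΩ
    obtain ⟨N, hN⟩ := eventually_subset_of_KConv E hconn hSne hK hV hSV hVc
    exact ⟨N, fun n hn => (hN n hn).trans (subset_closure.trans hVΩ)⟩
  · obtain ⟨V, hV, hSV, -, hVc⟩ :=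
      exists_open_between_and_isCompact_closure hScpt isOpen_univ (Set.subset_univ S)
    obtain ⟨N, hN⟩ := eventually_subset_of_KConv E hconn hSne hK hV hSV hVc
    exact ⟨N, hVc.of_isClosed_subset isClosed_closure
      (closure_mono (Set.iUnion₂_subset hN))⟩
end
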